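/- Let L, N be a lightlike frame along the unit-speed spacelike curve γ̂, fix u ∈ I with α_L(u) ≠ 0, and set H_L(u,x) = ⟨x − γ̂(u), L(u)⟩ and (∂H_L/∂u)(u,x) = ⟨x − γ̂(u), −α_L(u) e(u) − α_G(u) L(u)⟩. Then a point x ∈ ℝ³₁ satisfies H_L(u,x) = 0 and (∂H_L/∂u)(u,x) = 0 if and only if x = γ̂(u) + v L(u) for some v ∈ ℝ. Similarly, if α_N(u) ≠ 0, then ⟨x − γ̂(u), N(u)⟩ = 0 and ⟨x − γ̂(u), −α_N(u) e(u) + α_G(u) N(u)⟩ = 0 hold if and only if x = γ̂(u) + v N(u) for some v ∈ ℝ. -/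

import Mathlib

open scoped Topology

noncomputable section

/-- Points/vectors of Lorentz–Minkowski 3-space `ℝ³₁`. -/
abbrev R3 : Type := Fin 3 → ℝ

/-- The Lorentz–Minkowski scalar product `⟨x,y⟩ = -x₀y₀ + x₁y₁ + x₂y₂`. -/
def mink (x y : R3) : ℝ := -(x 0 * y 0) + x 1 * y 1 + x 2 * y 2

/-- `(L, N)` is a lightlike frame along the unit-speed spacelike curve `γ` on `I`:
`γ, L, N` are smooth on `I`, `⟨e,e⟩ = 1` (with `e = γ'`), `⟨e,L⟩ = ⟨e,N⟩ = 0`,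
`⟨L,L⟩ = ⟨N,N⟩ = 0` and `⟨L,N⟩ = 1` on `I`. -/
structure LightlikeFrame (I : Set ℝ) (γ L N : ℝ → R3) : Prop where
  smooth_gamma : ContDiffOn ℝ (⊤ : ℕ∞) γ I
  smooth_L : ContDiffOn ℝ (⊤ : ℕ∞) L I
  smooth_N : ContDiffOn ℝ (⊤ : ℕ∞) N I
  unit_speed : ∀ u ∈ I, mink (deriv γ u) (deriv γ u) = 1
  eL : ∀ u ∈ I, mink (deriv γ u) (L u) = 0
  eN : ∀ u ∈ I, mink (deriv γ u) (N u) = 0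
  LL : ∀ u ∈ I, mink (L u) (L u) = 0
  NN : ∀ u ∈ I, mink (N u) (N u) = 0
  LN : ∀ u ∈ I, mink (L u) (N u) = 1

/-- `α_L = ⟨γ'', L⟩`. -/
def alphaL (γ L : ℝ → R3) (u : ℝ) : ℝ := mink (deriv (deriv γ) u) (L u)

/-- `α_N = ⟨γ'', N⟩`. -/
def alphaN (γ N : ℝ → R3) (u : ℝ) : ℝ := mink (deriv (deriv γ) u) (N u)

/-- `α_G = ⟨L, N'⟩`. -/
def alphaG (L N : ℝ → R3) (u : ℝ) : ℝ := mink (L u) (deriv N u)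

/-- `σ_L = α_L' + α_L α_G`. -/
def sigmaL (γ L N : ℝ → R3) (u : ℝ) : ℝ :=
  deriv (alphaL γ L) u + alphaL γ L u * alphaG L N u

/-- `σ_N = α_N' - α_N α_G`. -/
def sigmaN (γ L N : ℝ → R3) (u : ℝ) : ℝ :=
  deriv (alphaN γ N) u - alphaN γ N u * alphaG L N u

/-!
The argument is pointwise linear algebra. Given `⟨x - γ, L⟩ = 0` and `α_L ≠ 0`, the vanishing of
`∂H_L/∂u` amounts to `⟨x - γ, e⟩ = 0`, so the two equations say that `x - γ` is orthogonal to the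
plane spanned by `e` and `L`. By nondegeneracy the orthogonal complement of this plane is a line,
and it contains the null vector `L`, which is orthogonal to both `e` and itself. Exchanging `L` and
`N` gives the second half.
-/

open LinearMap (BilinForm)
open Module (finrank)
open Submodule (span)

section CommRing

variable {R M : Type*} [CommRing R] [AddCommGroup M] [Module R M] {B : BilinForm R M} {e ℓ : M}

theorem linearIndependent_pair_of_apply_self_ne_zero [IsDomain R] [Module.IsTorsionFree R M]
    (hee : B e e ≠ 0) (hℓe : B ℓ e = 0) (hℓ₀ : ℓ ≠ 0) :
    LinearIndependent R ![e, ℓ] := by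
  rw [LinearIndependent.pair_iff]
  intro s t hst
  have hs : s = 0 := by
    simpa [hℓe, hee] using congrArg (B · e) hst
  exact ⟨hs, by simpa [hs, hℓ₀] using hst⟩

theorem mem_orthogonal_span_pair {x : M} :
    x ∈ B.orthogonal (span R {e, ℓ}) ↔ B e x = 0 ∧ B ℓ x = 0 := by
  have h : x ∈ B.orthogonal (span R {e, ℓ}) ↔ span R {e, ℓ} ≤ LinearMap.ker (B.flip x) := Iff.rfl
  simp [h, Submodule.span_le, Set.insert_subset_iff]

end CommRing

section Field

variable {K V : Type*} [Field K] [AddCommGroup V] [Module K V] {B : BilinForm K V} {e ℓ : V}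

theorem orthogonal_span_pair_eq_span_singleton (hB : B.Nondegenerate) (hV : finrank K V = 3)
    (hli : LinearIndependent K ![e, ℓ]) (heℓ : B e ℓ = 0) (hℓℓ : B ℓ ℓ = 0) :
    B.orthogonal (span K {e, ℓ}) = span K {ℓ} := by
  have : FiniteDimensional K V := Module.finite_of_finrank_pos (by simp [hV])
  have hplane : finrank K (span K {e, ℓ}) = 2 := by
    rw [← Matrix.range_cons_cons_empty e ℓ ![], finrank_span_eq_card hli, Fintype.card_fin]
  have hline : finrank K (span K {ℓ}) = 1 := finrank_span_singleton (hli.ne_zero 1)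
  refine (Submodule.eq_of_le_of_finrank_eq ?_ ?_).symm
  · rw [Submodule.span_singleton_le_iff_mem, mem_orthogonal_span_pair]
    exact ⟨heℓ, hℓℓ⟩
  · rw [BilinForm.finrank_orthogonal hB, hV, hplane, hline]

/-- Here `ℓ` is the null frame vector `L` or `N` and `α • e + β • ℓ` is its derivative. -/
theorem discriminant_of_height_functions_general (hB : B.Nondegenerate) (hV : finrank K V = 3)
    (hee : B e e ≠ 0) (hℓe : B ℓ e = 0) (hℓℓ : B ℓ ℓ = 0) (hℓ₀ : ℓ ≠ 0) {α : K} (hα : α ≠ 0)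
    (β : K) (p x : V) :
    (B (x - p) ℓ = 0 ∧ B (x - p) (α • e + β • ℓ) = 0) ↔ ∃ v : K, x = p + v • ℓ := by
  have hli := linearIndependent_pair_of_apply_self_ne_zero hee hℓe hℓ₀
  calc (B (x - p) ℓ = 0 ∧ B (x - p) (α • e + β • ℓ) = 0)
    _ ↔ B (x - p) e = 0 ∧ B (x - p) ℓ = 0 := by
      rw [and_comm, and_congr_left_iff]
      intro hℓ
      simp only [map_add, map_smul, hℓ, smul_zero, add_zero, smul_eq_zero, hα, false_or]
    _ ↔ x - p ∈ B.flip.orthogonal (span K {e, ℓ}) :=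
      (mem_orthogonal_span_pair (B := B.flip)).symm
    _ ↔ x - p ∈ span K {ℓ} := by
      rw [orthogonal_span_pair_eq_span_singleton hB.flip hV hli hℓe hℓℓ]
    _ ↔ ∃ v : K, x = p + v • ℓ := by
      simp only [Submodule.mem_span_singleton, eq_sub_iff_add_eq', eq_comm]

end Field

/-- The Lorentz–Minkowski scalar product `mink` as a bilinear form, given by its Gram matrix
`diag(-1, 1, 1)` so that Mathlib's theory of nondegenerate forms applies to it. -/
def minkForm : BilinForm ℝ R3 := Matrix.toBilin' (Matrix.diagonal ![-1, 1, 1])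

theorem minkForm_apply (x y : R3) : minkForm x y = mink x y := by
  simp [minkForm, mink, Matrix.toBilin'_apply', Matrix.mulVec_diagonal, dotProduct,
    Fin.sum_univ_three]

theorem minkForm_nondegenerate : minkForm.Nondegenerate :=
  BilinForm.nondegenerate_toBilin'_of_det_ne_zero' _ (by simp [Fin.prod_univ_three])

theorem mink_comm (x y : R3) : mink x y = mink y x := by
  simp only [mink, mul_comm]

namespace LightlikeFrame

variable {I : Set ℝ} {γ L N : ℝ → R3} {u : ℝ}

theorem symm (h : LightlikeFrame I γ L N) : LightlikeFrame I γ N L where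
  smooth_gamma := h.smooth_gamma
  smooth_L := h.smooth_N
  smooth_N := h.smooth_L
  unit_speed := h.unit_speed
  eL := h.eN
  eN := h.eL
  LL := h.NN
  NN := h.LL
  LN u hu := (mink_comm _ _).trans (h.LN u hu)

theorem L_ne_zero (h : LightlikeFrame I γ L N) (hu : u ∈ I) : L u ≠ 0 := by
  intro hL
  simpa [hL, mink] using h.LN u hu

theorem mink_eq_zero_iff_exists_eq_add_smul (h : LightlikeFrame I γ L N) (hu : u ∈ I) {α : ℝ}
    (hα : α ≠ 0) (β : ℝ) (x : R3) :
    (mink (x - γ u) (L u) = 0 ∧ mink (x - γ u) (α • deriv γ u + β • L u) = 0) ↔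
      ∃ v : ℝ, x = γ u + v • L u := by
  simp only [← minkForm_apply]
  refine discriminant_of_height_functions_general minkForm_nondegenerate (Module.finrank_fin_fun ℝ)
    ?_ ?_ ?_ (h.L_ne_zero hu) hα β (γ u) x
  · simp [minkForm_apply, h.unit_speed u hu]
  · rw [minkForm_apply, mink_comm, h.eL u hu]
  · rw [minkForm_apply, h.LL u hu]

end LightlikeFrame

/-- If `α_L(u) ≠ 0`, then `x` satisfies `H_L(u,x) = 0` and
`(∂H_L/∂u)(u,x) = ⟨x - γ̂(u), -α_L e - α_G L⟩ = 0` iff `x = γ̂(u) + v L(u)` for some `v`;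
similarly for `H_N` when `α_N(u) ≠ 0`. -/
theorem discriminant_of_height_functions (a b : ℝ) (γ L N : ℝ → R3)
    (hframe : LightlikeFrame (Set.Ioo a b) γ L N)
    (u : ℝ) (hu : u ∈ Set.Ioo a b) :
    (alphaL γ L u ≠ 0 → ∀ x : R3,
      ((mink (x - γ u) (L u) = 0 ∧
        mink (x - γ u) (-(alphaL γ L u) • deriv γ u - alphaG L N u • L u) = 0) ↔
       ∃ v : ℝ, x = γ u + v • L u)) ∧
    (alphaN γ N u ≠ 0 → ∀ x : R3,
      ((mink (x - γ u) (N u) = 0 ∧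
        mink (x - γ u) (-(alphaN γ N u) • deriv γ u + alphaG L N u • N u) = 0) ↔
       ∃ v : ℝ, x = γ u + v • N u)) := by
  refine ⟨fun hα x => ?_, fun hα x => ?_⟩
  · rw [sub_eq_add_neg (_ • _), ← neg_smul (alphaG L N u)]
    exact hframe.mink_eq_zero_iff_exists_eq_add_smul hu (neg_ne_zero.mpr hα) _ x
  · exact hframe.symm.mink_eq_zero_iff_exists_eq_add_smul hu (neg_ne_zero.mpr hα) _ x
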